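/- The family {K_f : f ∈ ℤ^{b,+}} is ℚ(q)-linearly independent and spans the image ℰ^b := 𝕋^b H_0 of the operator H_0; that is, {K_f : f ∈ ℤ^{b,+}} is a ℚ(q)-basis of ℰ^b. -/

import Mathlib

/-!
On each block the operators `H_i` satisfy the Hecke relations: the quadratic relation
`(H_i - q⁻¹)(H_i + q) = 0` (`HopN_sq`), the braid relation (`HopN_braid`) and far commutation
(`HopN_comm`). Together with the description of the length as the number of inversions, Matsumoto's
argument (`IsBlk.matsumoto`) shows that `H_w` is independent of the chosen reduced word, so
`H_{s_i w} = H_i H_w` (right action) whenever `ℓ(s_i w) > ℓ(w)`. Pairing `w` with `s_i w` in the sum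
defining `H_0` then yields `H_i H_0 = -q H_0` for all interior `i` (`IsBlk.S0_mul`).

Spanning. If `f(i) = f(i+1)` at an interior `i`, then `q⁻¹ M_f H_0 = M_f H_i H_0 = -q M_f H_0`, hence
`M_f H_0 = 0`. If `f(i)`, `f(i+1)` are in antidominant order, then `M_{f·s_i} H_0 = -q M_f H_0`.
Sorting `f` on each block therefore shows that the image of `H_0` is spanned by the vectors
`M_g H_0` with `g` strictly antidominant (`IsBlk.S0_mem_span`), and these `g` are exactly the
`f·w_0` with `f` dominant.

Independence. For `g` strictly antidominant, `M_g H_w = M_{g·w}`. If `g·w` is again strictly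
antidominant, then `w = 1`. So the coefficient of `M_{g'}` in `M_g H_0`, for `g`, `g'` both
strictly antidominant, is a nonzero scalar times `δ_{g,g'}` (`IsBlk.S0_apply`).
-/

open Finset

noncomputable section

abbrev Tsp (N : ℕ) : Type := (Fin N → ℤ) →₀ RatFunc ℚ

def qq : RatFunc ℚ := RatFunc.X

def sgn {N : ℕ} (b : Fin N → Bool) (i : Fin N) : ℤ := if b i then -1 else 1

def IsZeroOneSeq (m n : ℕ) (b : Fin (m + n) → Bool) : Prop :=
  (Finset.univ.filter (fun i => b i = false)).card = m ∧
  (Finset.univ.filter (fun i => b i = true)).card = n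

def Interior (N : ℕ) (b : Fin N → Bool) (i : ℕ) : Prop :=
  ∃ (h1 : i < N) (h2 : i + 1 < N), b ⟨i, h1⟩ = b ⟨i + 1, h2⟩

def HM {N : ℕ} (b : Fin N → Bool) (i : ℕ) (f : Fin N → ℤ) : Tsp N :=
  if h : i + 1 < N then
    let i0 : Fin N := ⟨i, Nat.lt_of_succ_lt h⟩
    let i1 : Fin N := ⟨i + 1, h⟩
    if f i0 = f i1 then qq⁻¹ • Finsupp.single f 1
    else if sgn b i0 * f i0 < sgn b i0 * f i1 then
      Finsupp.single (f ∘ ⇑(Equiv.swap i0 i1)) 1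
    else
      Finsupp.single (f ∘ ⇑(Equiv.swap i0 i1)) 1 - (qq - qq⁻¹) • Finsupp.single f 1
  else Finsupp.single f 1

def HopN {N : ℕ} (b : Fin N → Bool) (i : ℕ) : Module.End (RatFunc ℚ) (Tsp N) :=
  Finsupp.lsum (RatFunc ℚ) fun f => LinearMap.toSpanSingleton (RatFunc ℚ) (Tsp N) (HM b i f)

def swapPerm (N i : ℕ) : Equiv.Perm (Fin N) :=
  if h : i + 1 < N then Equiv.swap ⟨i, Nat.lt_of_succ_lt h⟩ ⟨i + 1, h⟩ else 1

def wordProd (N : ℕ) (l : List ℕ) : Equiv.Perm (Fin N) := (l.map (swapPerm N)).prod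

def Hword {N : ℕ} (b : Fin N → Bool) (l : List ℕ) : Module.End (RatFunc ℚ) (Tsp N) :=
  ((l.map (HopN b)).reverse).prod

def blen {N : ℕ} (b : Fin N → Bool) (w : Equiv.Perm (Fin N)) : ℕ :=
  sInf {k | ∃ l : List ℕ, (∀ i ∈ l, Interior N b i) ∧ wordProd N l = w ∧ l.length = k}

def IsReducedWord {N : ℕ} (b : Fin N → Bool) (w : Equiv.Perm (Fin N)) (l : List ℕ) : Prop :=
  (∀ i ∈ l, Interior N b i) ∧ wordProd N l = w ∧ l.length = blen b w

open scoped Classical in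
def Hw {N : ℕ} (b : Fin N → Bool) (w : Equiv.Perm (Fin N)) : Module.End (RatFunc ℚ) (Tsp N) :=
  if h : ∃ l : List ℕ, IsReducedWord b w l then Hword b h.choose else 0

def BlockData (N : ℕ) (b : Fin N → Bool) (d : ℕ) (r : ℕ → ℕ) : Prop :=
  r 0 = 0 ∧ r d = N ∧ (∀ k < d, r k < r (k + 1)) ∧
  (∀ k < d, ∀ i j : Fin N,
    r k ≤ i.val → i.val < r (k + 1) → r k ≤ j.val → j.val < r (k + 1) → b i = b j) ∧
  (∀ k, 0 < k → k < d → ∀ (h1 : r k - 1 < N) (h2 : r k < N), b ⟨r k - 1, h1⟩ ≠ b ⟨r k, h2⟩)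

def BlockPerm (N : ℕ) (d : ℕ) (r : ℕ → ℕ) (x : Equiv.Perm (Fin N)) : Prop :=
  ∀ k < d, ∀ i : Fin N, r k ≤ i.val → i.val < r (k + 1) →
    r k ≤ (x i).val ∧ (x i).val < r (k + 1)

def IsW0 (N : ℕ) (d : ℕ) (r : ℕ → ℕ) (w0 : Equiv.Perm (Fin N)) : Prop :=
  ∀ k < d, ∀ i : Fin N, r k ≤ i.val → i.val < r (k + 1) →
    ((w0 i).val) = r k + r (k + 1) - 1 - i.val

def Dominant {N : ℕ} (b : Fin N → Bool) (d : ℕ) (r : ℕ → ℕ) (f : Fin N → ℤ) : Prop :=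
  ∀ k < d, ∀ i j : Fin N, r k ≤ i.val → i.val < j.val → j.val < r (k + 1) →
    sgn b i * f j < sgn b i * f i

def Antidominant {N : ℕ} (b : Fin N → Bool) (d : ℕ) (r : ℕ → ℕ) (f : Fin N → ℤ) : Prop :=
  ∀ k < d, ∀ i j : Fin N, r k ≤ i.val → i.val < j.val → j.val < r (k + 1) →
    sgn b i * f i ≤ sgn b i * f j

def StrictAntidominant {N : ℕ} (b : Fin N → Bool) (d : ℕ) (r : ℕ → ℕ) (f : Fin N → ℤ) : Prop :=
  ∀ k < d, ∀ i j : Fin N, r k ≤ i.val → i.val < j.val → j.val < r (k + 1) →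
    sgn b i * f i < sgn b i * f j

def WeaklyDominant {N : ℕ} (b : Fin N → Bool) (d : ℕ) (r : ℕ → ℕ) (f : Fin N → ℤ) : Prop :=
  ∀ k < d, ∀ i j : Fin N, r k ≤ i.val → i.val ≤ j.val → j.val < r (k + 1) →
    sgn b i * f j ≤ sgn b i * f i

open scoped Classical in
def H0 {N : ℕ} (b : Fin N → Bool) (d : ℕ) (r : ℕ → ℕ) (w0 : Equiv.Perm (Fin N)) :
    Module.End (RatFunc ℚ) (Tsp N) :=
  ∑ w ∈ Finset.univ.filter (fun x : Equiv.Perm (Fin N) => BlockPerm N d r x),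
    ((-qq) ^ ((blen b w : ℤ) - (blen b w0 : ℤ))) • Hw b w

def Kel {N : ℕ} (b : Fin N → Bool) (d : ℕ) (r : ℕ → ℕ) (w0 : Equiv.Perm (Fin N))
    (f : Fin N → ℤ) : Tsp N :=
  H0 b d r w0 (Finsupp.single (f ∘ ⇑w0) 1)

def qint (k : ℕ) : RatFunc ℚ := (qq ^ (k : ℤ) - qq ^ (-(k : ℤ))) / (qq - qq⁻¹)

def qfact : ℕ → RatFunc ℚ
  | 0 => 1
  | k + 1 => qfact k * qint (k + 1)

def bform {N : ℕ} (u v : Tsp N) : RatFunc ℚ := u.sum fun f c => c * v f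

def sigmaMap {N : ℕ} (bar : RatFunc ℚ →+* RatFunc ℚ) (u : Tsp N) : Tsp N :=
  u.sum fun f c => Finsupp.single (-f) (bar c)

def sharp {N : ℕ} (b : Fin N → Bool) (f : Fin N → ℤ) (a : ℤ) (j : ℕ) : ℤ :=
  ∑ i ∈ Finset.univ.filter (fun i : Fin N => j ≤ i.val ∧ f i ≤ a), sgn b i

def bruhatLE {N : ℕ} (b : Fin N → Bool) (g f : Fin N → ℤ) : Prop :=
  (∀ (a : ℤ) (j : ℕ), sharp b g a j ≤ sharp b f a j) ∧
  (∀ a : ℤ, sharp b g a 0 = sharp b f a 0)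

def HactFun {N : ℕ} (b : Fin N → Bool) (i : ℕ) (u : (Fin N → ℤ) → RatFunc ℚ) :
    (Fin N → ℤ) → RatFunc ℚ := fun h =>
  if hlt : i + 1 < N then
    let i0 : Fin N := ⟨i, Nat.lt_of_succ_lt hlt⟩
    let i1 : Fin N := ⟨i + 1, hlt⟩
    if h i0 = h i1 then qq⁻¹ * u h
    else if sgn b i0 * h i0 < sgn b i0 * h i1 then u (h ∘ ⇑(Equiv.swap i0 i1))
    else u (h ∘ ⇑(Equiv.swap i0 i1)) - (qq - qq⁻¹) * u h
  else u h


/-! ### The Hecke relations -/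

lemma qq_ne_zero : qq ≠ 0 := RatFunc.X_ne_zero

lemma qq_inv_ne_neg : qq⁻¹ ≠ -qq := by
  intro h
  have h1 : qq * qq + 1 = 0 := by
    have h2 : qq * qq⁻¹ = 1 := mul_inv_cancel₀ qq_ne_zero
    rw [h] at h2
    linear_combination -h2
  have h3 : (Polynomial.X * Polynomial.X + 1 : Polynomial ℚ) = 0 := by
    apply RatFunc.algebraMap_injective ℚ
    simpa [qq, RatFunc.algebraMap_X] using h1
  have h4 := congrArg (Polynomial.eval 0) h3
  simp at h4

lemma sgn_ne_zero {N : ℕ} (b : Fin N → Bool) (i : Fin N) : sgn b i ≠ 0 := by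
  unfold sgn; split <;> norm_num

lemma HopN_single {N : ℕ} (b : Fin N → Bool) (i : ℕ) (f : Fin N → ℤ) :
    HopN b i (Finsupp.single f 1) = HM b i f := by
  simp [HopN]

lemma swapPerm_of_lt {N i : ℕ} (h : i + 1 < N) :
    swapPerm N i = Equiv.swap ⟨i, Nat.lt_of_succ_lt h⟩ ⟨i + 1, h⟩ := by
  simp [swapPerm, h]

lemma swapPerm_mul_self (N i : ℕ) : swapPerm N i * swapPerm N i = 1 := by
  unfold swapPerm; split <;> simp

lemma HM_eq {N : ℕ} {b : Fin N → Bool} {i : ℕ} (h : i + 1 < N) {f : Fin N → ℤ}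
    (hf : f ⟨i, Nat.lt_of_succ_lt h⟩ = f ⟨i + 1, h⟩) :
    HM b i f = qq⁻¹ • Finsupp.single f 1 := by
  simp [HM, h, hf]

lemma HM_lt {N : ℕ} {b : Fin N → Bool} {i : ℕ} (h : i + 1 < N) {f : Fin N → ℤ}
    (hf : sgn b ⟨i, Nat.lt_of_succ_lt h⟩ * f ⟨i, Nat.lt_of_succ_lt h⟩ <
      sgn b ⟨i, Nat.lt_of_succ_lt h⟩ * f ⟨i + 1, h⟩) :
    HM b i f = Finsupp.single (f ∘ swapPerm N i) 1 := by
  have h1 : f ⟨i, Nat.lt_of_succ_lt h⟩ ≠ f ⟨i + 1, h⟩ := fun h2 => by simp [h2] at hf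
  simp only [HM, h, dif_pos, if_neg h1, if_pos hf, swapPerm_of_lt h]

lemma HM_gt {N : ℕ} {b : Fin N → Bool} {i : ℕ} (h : i + 1 < N) {f : Fin N → ℤ}
    (hf : sgn b ⟨i, Nat.lt_of_succ_lt h⟩ * f ⟨i + 1, h⟩ <
      sgn b ⟨i, Nat.lt_of_succ_lt h⟩ * f ⟨i, Nat.lt_of_succ_lt h⟩) :
    HM b i f = Finsupp.single (f ∘ swapPerm N i) 1 - (qq - qq⁻¹) • Finsupp.single f 1 := by
  have h1 : f ⟨i, Nat.lt_of_succ_lt h⟩ ≠ f ⟨i + 1, h⟩ := fun h2 => by simp [h2] at hf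
  simp only [HM, h, dif_pos, if_neg h1, if_neg hf.not_gt, swapPerm_of_lt h]

lemma end_ext {N : ℕ} {S T : Module.End (RatFunc ℚ) (Tsp N)}
    (h : ∀ f, S (Finsupp.single f 1) = T (Finsupp.single f 1)) : S = T :=
  Finsupp.lhom_ext' fun f => LinearMap.ext_ring (h f)

lemma quad_aux {K V : Type*} [Field K] [AddCommGroup V] [Module K V] {q : K} (hq : q * q⁻¹ = 1)
    (v : V) : q⁻¹ • q⁻¹ • v = v - (q - q⁻¹) • q⁻¹ • v := by
  match_scalars
  linear_combination hq

/-- The quadratic relation `H_i² = 1 - (q - q⁻¹) H_i`. -/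
lemma HopN_sq {N : ℕ} (b : Fin N → Bool) {i : ℕ} (h : i + 1 < N) :
    HopN b i * HopN b i = 1 - (qq - qq⁻¹) • HopN b i := by
  have hq : qq * qq⁻¹ = 1 := mul_inv_cancel₀ qq_ne_zero
  apply end_ext
  intro f
  have hss : (f ∘ swapPerm N i) ∘ swapPerm N i = f := by
    rw [Function.comp_assoc, ← Equiv.Perm.coe_mul, swapPerm_mul_self]; rfl
  have e0 : (f ∘ swapPerm N i) ⟨i, Nat.lt_of_succ_lt h⟩ = f ⟨i + 1, h⟩ := by
    simp [swapPerm_of_lt h]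
  have e1 : (f ∘ swapPerm N i) ⟨i + 1, h⟩ = f ⟨i, Nat.lt_of_succ_lt h⟩ := by
    simp [swapPerm_of_lt h]
  simp only [Module.End.mul_apply, LinearMap.sub_apply, LinearMap.smul_apply, Module.End.one_apply,
    HopN_single]
  rcases lt_trichotomy (sgn b ⟨i, Nat.lt_of_succ_lt h⟩ * f ⟨i, Nat.lt_of_succ_lt h⟩)
    (sgn b ⟨i, Nat.lt_of_succ_lt h⟩ * f ⟨i + 1, h⟩) with hlt | heq | hgt
  · rw [HM_lt h hlt, HopN_single, HM_gt h (by rw [e0, e1]; exact hlt), hss]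
  · rw [HM_eq h (mul_left_cancel₀ (sgn_ne_zero _ _) heq), map_smul, HopN_single,
      HM_eq h (mul_left_cancel₀ (sgn_ne_zero _ _) heq)]
    exact quad_aux hq _
  · rw [HM_gt h hgt, map_sub, map_smul, HopN_single, HopN_single,
      HM_lt h (by rw [e0, e1]; exact hgt), HM_gt h hgt, hss]

/-- Three slots with values `x, y, z`: operators acting on the first and the last two slots by the
Hecke rule satisfy the braid relation. -/
lemma braid_abstract {K V : Type*} [Field K] [AddCommGroup V] [Module K V] {q : K} (hq : q * q⁻¹ = 1)
    (S T : Module.End K V) (c : ℤ) (hc : c ≠ 0) (E : ℤ → ℤ → ℤ → V)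
    (Seq : ∀ x z, S (E x x z) = q⁻¹ • E x x z)
    (Slt : ∀ x y z, c * x < c * y → S (E x y z) = E y x z)
    (Sgt : ∀ x y z, c * y < c * x → S (E x y z) = E y x z - (q - q⁻¹) • E x y z)
    (Teq : ∀ x z, T (E z x x) = q⁻¹ • E z x x)
    (Tlt : ∀ x y z, c * x < c * y → T (E z x y) = E z y x)
    (Tgt : ∀ x y z, c * y < c * x → T (E z x y) = E z y x - (q - q⁻¹) • E z x y)
    (x y z : ℤ) : S (T (S (E x y z))) = T (S (T (E x y z))) := by
  have key : ∀ x y : ℤ, c * x < c * y ∨ x = y ∨ c * y < c * x := fun x y => by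
    rcases lt_trichotomy (c * x) (c * y) with h | h | h
    · exact Or.inl h
    · exact Or.inr (Or.inl (mul_left_cancel₀ hc h))
    · exact Or.inr (Or.inr h)
  rcases key x y with h1 | h1 | h1 <;> rcases key y z with h2 | h2 | h2 <;>
    rcases key x z with h3 | h3 | h3 <;> (try subst h1) <;> (try subst h2) <;> (try subst h3) <;>
    first
    | (exfalso; omega)
    | (simp only [map_sub, map_smul, smul_sub, *]
       try (match_scalars <;> grind))

/-- Four slots with values `x, y, z, t`: operators acting on disjoint pairs of slots by the Hecke
rule commute. -/
lemma comm_abstract {K V : Type*} [Field K] [AddCommGroup V] [Module K V] {q : K}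
    (S T : Module.End K V) (c c' : ℤ) (hc : c ≠ 0) (hc' : c' ≠ 0)
    (E : ℤ → ℤ → ℤ → ℤ → V)
    (Seq : ∀ x z t, S (E x x z t) = q⁻¹ • E x x z t)
    (Slt : ∀ x y z t, c * x < c * y → S (E x y z t) = E y x z t)
    (Sgt : ∀ x y z t, c * y < c * x → S (E x y z t) = E y x z t - (q - q⁻¹) • E x y z t)
    (Teq : ∀ x z t, T (E z t x x) = q⁻¹ • E z t x x)
    (Tlt : ∀ x y z t, c' * x < c' * y → T (E z t x y) = E z t y x)
    (Tgt : ∀ x y z t, c' * y < c' * x → T (E z t x y) = E z t y x - (q - q⁻¹) • E z t x y)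
    (x y z t : ℤ) : S (T (E x y z t)) = T (S (E x y z t)) := by
  have key : ∀ c : ℤ, c ≠ 0 → ∀ x y : ℤ, c * x < c * y ∨ x = y ∨ c * y < c * x :=
      fun c hc x y => by
    rcases lt_trichotomy (c * x) (c * y) with h | h | h
    · exact Or.inl h
    · exact Or.inr (Or.inl (mul_left_cancel₀ hc h))
    · exact Or.inr (Or.inr h)
  rcases key c hc x y with h1 | h1 | h1 <;> rcases key c' hc' z t with h2 | h2 | h2 <;>
    (try subst h1) <;> (try subst h2) <;>
    simp only [map_sub, map_smul, *] <;>
    try module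
/-- The function agreeing with `f` off `p, p'`, with values `x, y` there. -/
def upd2 {N : ℕ} (f : Fin N → ℤ) (p p' : Fin N) (x y : ℤ) : Fin N → ℤ :=
  Function.update (Function.update f p x) p' y

lemma upd2_fst {N : ℕ} (f : Fin N → ℤ) {p p' : Fin N} (h : p ≠ p') (x y : ℤ) :
    upd2 f p p' x y p = x := by simp [upd2, h]

lemma upd2_snd {N : ℕ} (f : Fin N → ℤ) (p p' : Fin N) (x y : ℤ) :
    upd2 f p p' x y p' = y := by simp [upd2]

lemma upd2_comp_swap {N : ℕ} (f : Fin N → ℤ) {p p' : Fin N} (h : p ≠ p') (x y : ℤ) :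
    upd2 f p p' x y ∘ Equiv.swap p p' = upd2 f p p' y x := by
  funext t
  by_cases h1 : t = p
  · subst h1; simp [upd2, h]
  by_cases h2 : t = p'
  · subst h2; simp [upd2, h]
  simp [upd2, h1, h2, Equiv.swap_apply_of_ne_of_ne]

/-- The Hecke rule for `H_i` in terms of the values `x, y` at the positions `i, i + 1`. -/
lemma HopN_upd2 {N : ℕ} (b : Fin N → Bool) {i : ℕ} (h : i + 1 < N) (f : Fin N → ℤ) :
    let E : ℤ → ℤ → Tsp N := fun x y =>
      Finsupp.single (upd2 f ⟨i, Nat.lt_of_succ_lt h⟩ ⟨i + 1, h⟩ x y) 1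
    (∀ x, HopN b i (E x x) = qq⁻¹ • E x x) ∧
    (∀ x y, sgn b ⟨i, Nat.lt_of_succ_lt h⟩ * x < sgn b ⟨i, Nat.lt_of_succ_lt h⟩ * y →
      HopN b i (E x y) = E y x) ∧
    (∀ x y, sgn b ⟨i, Nat.lt_of_succ_lt h⟩ * y < sgn b ⟨i, Nat.lt_of_succ_lt h⟩ * x →
      HopN b i (E x y) = E y x - (qq - qq⁻¹) • E x y) := by
  have hne : (⟨i, Nat.lt_of_succ_lt h⟩ : Fin N) ≠ ⟨i + 1, h⟩ := by simp
  refine ⟨fun x => ?_, fun x y hxy => ?_, fun x y hxy => ?_⟩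
  · rw [HopN_single, HM_eq h (by rw [upd2_fst _ hne, upd2_snd])]
  · rw [HopN_single, HM_lt h (by rwa [upd2_fst _ hne, upd2_snd]), swapPerm_of_lt h,
      upd2_comp_swap _ hne]
  · rw [HopN_single, HM_gt h (by rwa [upd2_fst _ hne, upd2_snd]), swapPerm_of_lt h,
      upd2_comp_swap _ hne]

/-- The braid relation for adjacent interior indices. -/
lemma HopN_braid {N : ℕ} (b : Fin N → Bool) {i : ℕ} (hi : Interior N b i)
    (hi' : Interior N b (i + 1)) :
    HopN b i * HopN b (i + 1) * HopN b i = HopN b (i + 1) * HopN b i * HopN b (i + 1) := by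
  obtain ⟨h0, h1, hb⟩ := hi
  obtain ⟨_, h2, _⟩ := hi'
  apply end_ext
  intro f
  simp only [Module.End.mul_apply]
  set p : Fin N := ⟨i, h0⟩ with hp
  set p' : Fin N := ⟨i + 1, h1⟩ with hp'
  set p'' : Fin N := ⟨i + 1 + 1, h2⟩ with hp''
  have hs : sgn b p' = sgn b p := by simp only [sgn, hb]
  have n1 : p ≠ p' := by simp [hp, hp']
  have n2 : p ≠ p'' := by simp only [hp, hp'', ne_eq, Fin.mk.injEq]; omega
  have n3 : p' ≠ p'' := by simp [hp', hp'']
  let E : ℤ → ℤ → ℤ → Tsp N := fun x y z =>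
    Finsupp.single (upd2 (Function.update f p x) p' p'' y z) 1
  have hE : ∀ x y z, E x y z = Finsupp.single (upd2 (Function.update f p'' z) p p' x y) 1 := by
    intro x y z
    simp only [E]
    congr 1
    funext t
    by_cases h1 : t = p
    · subst h1; simp [upd2, n1, n2]
    by_cases h2 : t = p'
    · subst h2; simp [upd2, n3]
    by_cases h3 : t = p''
    · subst h3; simp [upd2, n2.symm, n3.symm]
    simp [upd2, h1, h2, h3]
  have hf : Finsupp.single f 1 = E (f p) (f p') (f p'') := by simp [E, upd2]
  rw [hf]
  refine braid_abstract (mul_inv_cancel₀ qq_ne_zero) _ _ (sgn b p) (sgn_ne_zero _ _) E ?_ ?_ ?_ ?_ ?_ ?_ _ _ _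
  · intro x z; rw [hE]; exact (HopN_upd2 b h1 _).1 x
  · intro x y z h; rw [hE, hE]; exact (HopN_upd2 b h1 _).2.1 x y h
  · intro x y z h; rw [hE, hE]; exact (HopN_upd2 b h1 _).2.2 x y h
  · intro x z; exact (HopN_upd2 b h2 _).1 x
  · intro x y z h; rw [← hs] at h; exact (HopN_upd2 b h2 _).2.1 x y h
  · intro x y z h; rw [← hs] at h; exact (HopN_upd2 b h2 _).2.2 x y h

/-- Far commutation. -/
lemma HopN_comm {N : ℕ} (b : Fin N → Bool) {i j : ℕ} (hij : i + 1 < j) (hj : j + 1 < N) :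
    HopN b i * HopN b j = HopN b j * HopN b i := by
  have hi : i + 1 < N := by omega
  apply end_ext
  intro f
  simp only [Module.End.mul_apply]
  set p : Fin N := ⟨i, Nat.lt_of_succ_lt hi⟩ with hp
  set p' : Fin N := ⟨i + 1, hi⟩ with hp'
  set u : Fin N := ⟨j, Nat.lt_of_succ_lt hj⟩ with hu
  set u' : Fin N := ⟨j + 1, hj⟩ with hu'
  have n1 : p ≠ p' := by simp [hp, hp']
  have n2 : p ≠ u := by simp only [hp, hu, ne_eq, Fin.mk.injEq]; omega
  have n3 : p ≠ u' := by simp only [hp, hu', ne_eq, Fin.mk.injEq]; omega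
  have n4 : p' ≠ u := by simp only [hp', hu, ne_eq, Fin.mk.injEq]; omega
  have n5 : p' ≠ u' := by simp only [hp', hu', ne_eq, Fin.mk.injEq]; omega
  have n6 : u ≠ u' := by simp [hu, hu']
  let E : ℤ → ℤ → ℤ → ℤ → Tsp N := fun x y z t =>
    Finsupp.single (upd2 (upd2 f p p' x y) u u' z t) 1
  have hE : ∀ x y z t, E x y z t = Finsupp.single (upd2 (upd2 f u u' z t) p p' x y) 1 := by
    intro x y z t
    simp only [E]
    congr 1
    funext s
    by_cases h1 : s = p
    · subst h1; simp [upd2, n1, n2, n3]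
    by_cases h2 : s = p'
    · subst h2; simp [upd2, n4, n5]
    by_cases h3 : s = u
    · subst h3; simp [upd2, n2.symm, n4.symm, n6]
    by_cases h4 : s = u'
    · subst h4; simp [upd2, n3.symm, n5.symm]
    simp [upd2, h1, h2, h3, h4]
  have hf : Finsupp.single f 1 = E (f p) (f p') (f u) (f u') := by simp [E, upd2]
  rw [hf]
  refine comm_abstract (q := qq) _ _ (sgn b p) (sgn b u) (sgn_ne_zero _ _) (sgn_ne_zero _ _) E
    ?_ ?_ ?_ ?_ ?_ ?_ _ _ _ _
  · intro x z t; rw [hE]; exact (HopN_upd2 b hi _).1 x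
  · intro x y z t h; rw [hE, hE]; exact (HopN_upd2 b hi _).2.1 x y h
  · intro x y z t h; rw [hE, hE]; exact (HopN_upd2 b hi _).2.2 x y h
  · intro x z t; exact (HopN_upd2 b hj _).1 x
  · intro x y z t h; exact (HopN_upd2 b hj _).2.1 x y h
  · intro x y z t h; exact (HopN_upd2 b hj _).2.2 x y h

/-! ### Inversions and block permutations -/

/-- The number of inversions of an integer-valued function on `Fin N`. -/
def invF {N : ℕ} (F : Fin N → ℤ) : ℕ :=
  (Finset.univ.filter fun p : Fin N × Fin N => p.1 < p.2 ∧ F p.2 < F p.1).card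

/-- The number of inversions of a permutation. -/
def invP {N : ℕ} (w : Equiv.Perm (Fin N)) : ℕ := invF fun i => ((w i).val : ℤ)

lemma swapPerm_val {N i : ℕ} (h : i + 1 < N) (a : Fin N) :
    (swapPerm N i a).val = if a.val = i then i + 1 else if a.val = i + 1 then i else a.val := by
  rw [swapPerm_of_lt h, Equiv.swap_apply_def]
  simp only [Fin.ext_iff]
  split_ifs <;> rfl

lemma swapPerm_apply_self (N i : ℕ) (a : Fin N) : swapPerm N i (swapPerm N i a) = a := by
  rw [← Equiv.Perm.mul_apply, swapPerm_mul_self]; rfl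

lemma swapPerm_left {N i : ℕ} (h : i + 1 < N) :
    swapPerm N i ⟨i, Nat.lt_of_succ_lt h⟩ = ⟨i + 1, h⟩ := by
  simp [swapPerm_of_lt h]

lemma swapPerm_right {N i : ℕ} (h : i + 1 < N) :
    swapPerm N i ⟨i + 1, h⟩ = ⟨i, Nat.lt_of_succ_lt h⟩ := by
  simp [swapPerm_of_lt h]

lemma invF_swap {N i : ℕ} (h : i + 1 < N) (F : Fin N → ℤ)
    (hF : F ⟨i, Nat.lt_of_succ_lt h⟩ < F ⟨i + 1, h⟩) :
    invF (F ∘ swapPerm N i) = invF F + 1 := by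
  classical
  have hord : ∀ a c : Fin N, a < c → ¬ (a.val = i ∧ c.val = i + 1) →
      swapPerm N i a < swapPerm N i c := by
    intro a c hac hne
    rw [Fin.lt_def] at hac ⊢
    rw [swapPerm_val h, swapPerm_val h]
    split_ifs <;> omega
  -- Apart from `(i, i + 1)`, the inversions of `F ∘ s_i` are the `s_i`-images of those of `F`.
  have hset : (Finset.univ.filter fun p : Fin N × Fin N =>
      p.1 < p.2 ∧ (F ∘ swapPerm N i) p.2 < (F ∘ swapPerm N i) p.1) =
      insert (⟨i, Nat.lt_of_succ_lt h⟩, ⟨i + 1, h⟩)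
        ((Finset.univ.filter fun p : Fin N × Fin N => p.1 < p.2 ∧ F p.2 < F p.1).map
          ((swapPerm N i).prodCongr (swapPerm N i)).toEmbedding) := by
    ext ⟨a, c⟩
    simp only [Finset.mem_filter, Finset.mem_univ, true_and, Finset.mem_insert, Finset.mem_map,
      Prod.mk.injEq, Function.comp_apply, Prod.exists, Equiv.coe_toEmbedding,
      Equiv.prodCongr_apply, Prod.map_apply]
    constructor
    · rintro ⟨hac, hF'⟩
      by_cases hne : a.val = i ∧ c.val = i + 1
      · left; exact ⟨Fin.ext hne.1, Fin.ext hne.2⟩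
      · right
        exact ⟨_, _, ⟨hord a c hac hne, hF'⟩, swapPerm_apply_self _ _ _, swapPerm_apply_self _ _ _⟩
    · rintro (⟨rfl, rfl⟩ | ⟨a', c', ⟨hac, hF'⟩, rfl, rfl⟩)
      · rw [swapPerm_left h, swapPerm_right h]
        exact ⟨Fin.lt_def.2 (Nat.lt_succ_self i), hF⟩
      · rw [swapPerm_apply_self, swapPerm_apply_self]
        refine ⟨hord a' c' hac ?_, hF'⟩
        rintro ⟨h1, h2⟩
        have e1 : a' = ⟨i, Nat.lt_of_succ_lt h⟩ := Fin.ext h1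
        have e2 : c' = ⟨i + 1, h⟩ := Fin.ext h2
        rw [e1, e2] at hF'
        exact lt_asymm hF hF'
  unfold invF
  rw [hset, Finset.card_insert_of_notMem, Finset.card_map]
  simp only [Finset.mem_map, Finset.mem_filter, Finset.mem_univ, true_and, Prod.exists,
    Equiv.coe_toEmbedding, Equiv.prodCongr_apply, Prod.map_apply, Prod.mk.injEq, not_exists,
    not_and, and_imp]
  intro a c hac _ ha hc
  rw [← swapPerm_right h] at ha
  rw [← swapPerm_left h] at hc
  rw [(swapPerm N i).injective ha, (swapPerm N i).injective hc, Fin.lt_def] at hac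
  simp at hac

lemma invP_mul_swap {N i : ℕ} (h : i + 1 < N) (w : Equiv.Perm (Fin N))
    (hw : w ⟨i, Nat.lt_of_succ_lt h⟩ < w ⟨i + 1, h⟩) :
    invP (w * swapPerm N i) = invP w + 1 :=
  invF_swap h (fun i => ((w i).val : ℤ)) (by exact_mod_cast hw)

lemma invP_mul_swap' {N i : ℕ} (h : i + 1 < N) (w : Equiv.Perm (Fin N))
    (hw : w ⟨i + 1, h⟩ < w ⟨i, Nat.lt_of_succ_lt h⟩) :
    invP (w * swapPerm N i) + 1 = invP w := by
  rw [← invP_mul_swap h (w * swapPerm N i), mul_assoc, swapPerm_mul_self, mul_one]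
  simpa [swapPerm_left, swapPerm_right, h] using hw

lemma invP_inv' {N : ℕ} (w : Equiv.Perm (Fin N)) : invP w⁻¹ = invP w := by
  refine Finset.card_bij' (fun p _ => (w⁻¹ p.2, w⁻¹ p.1)) (fun p _ => (w p.2, w p.1)) ?_ ?_ ?_ ?_ <;>
    simp +contextual

lemma invP_one {N : ℕ} : invP (1 : Equiv.Perm (Fin N)) = 0 := by
  simp only [invP, invF, Finset.card_eq_zero, Finset.filter_eq_empty_iff]
  rintro ⟨a, c⟩ _ ⟨h1, h2⟩
  simp only [Equiv.Perm.coe_one, id_eq, Nat.cast_lt, Fin.val_fin_lt] at h1 h2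
  exact lt_asymm h1 h2

lemma invP_swap_mul {N i : ℕ} (h : i + 1 < N) (w : Equiv.Perm (Fin N))
    (hw : w⁻¹ ⟨i, Nat.lt_of_succ_lt h⟩ < w⁻¹ ⟨i + 1, h⟩) :
    invP (swapPerm N i * w) = invP w + 1 := by
  have hs : (swapPerm N i)⁻¹ = swapPerm N i := inv_eq_of_mul_eq_one_left (swapPerm_mul_self N i)
  rw [← invP_inv' (swapPerm N i * w), mul_inv_rev, hs, invP_mul_swap h _ hw, invP_inv']

/-- `blk` labels the blocks of `b` in increasing order: it is monotone, it is constant exactly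
across interior indices, and `b` is constant on its fibres. -/
structure IsBlk {N : ℕ} (b : Fin N → Bool) (blk : Fin N → ℕ) : Prop where
  mono : Monotone blk
  int : ∀ (i : ℕ) (h : i + 1 < N),
    Interior N b i ↔ blk ⟨i, Nat.lt_of_succ_lt h⟩ = blk ⟨i + 1, h⟩
  col : ∀ i j, blk i = blk j → b i = b j

/-- Permutations preserving every block. -/
def PB {N : ℕ} (blk : Fin N → ℕ) (x : Equiv.Perm (Fin N)) : Prop := ∀ i, blk (x i) = blk i

lemma PB.mul {N : ℕ} {blk : Fin N → ℕ} {x y : Equiv.Perm (Fin N)} (hx : PB blk x) (hy : PB blk y) :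
    PB blk (x * y) := fun i => by rw [Equiv.Perm.mul_apply, hx, hy]

lemma PB.inv {N : ℕ} {blk : Fin N → ℕ} {x : Equiv.Perm (Fin N)} (hx : PB blk x) :
    PB blk x⁻¹ := fun i => by rw [← hx (x⁻¹ i)]; simp

lemma PB_one {N : ℕ} {blk : Fin N → ℕ} : PB blk (1 : Equiv.Perm (Fin N)) := fun _ => rfl

lemma IsBlk.swap {N : ℕ} {b : Fin N → Bool} {blk : Fin N → ℕ} (H : IsBlk b blk) {i : ℕ}
    (hi : Interior N b i) : PB blk (swapPerm N i) := by
  obtain ⟨h0, h1, -⟩ := id hi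
  have e := (H.int i h1).1 hi
  intro a
  rw [swapPerm_of_lt h1, Equiv.swap_apply_def]
  split_ifs with h2 h3
  · rw [h2, e]
  · rw [h3, e]
  · rfl

lemma IsBlk.strict {N : ℕ} {b : Fin N → Bool} {blk : Fin N → ℕ} (H : IsBlk b blk)
    (F : Fin N → ℤ)
    (hF : ∀ (i : ℕ) (h : i + 1 < N), Interior N b i → F ⟨i, Nat.lt_of_succ_lt h⟩ < F ⟨i + 1, h⟩) :
    ∀ a c : Fin N, a < c → blk a = blk c → F a < F c := by
  rintro a ⟨c, hc⟩
  induction c with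
  | zero => intro h; simp [Fin.lt_def] at h
  | succ c ih =>
    intro hac he
    have hac' : a.val ≤ c := by rw [Fin.lt_def] at hac; exact Nat.lt_succ_iff.1 hac
    have hc' : c < N := by omega
    have e1 : blk a ≤ blk ⟨c, hc'⟩ := H.mono (Fin.le_def.2 hac')
    have e2 : blk ⟨c, hc'⟩ ≤ blk ⟨c + 1, hc⟩ := H.mono (Fin.le_def.2 (by simp))
    have hlast := hF c hc ((H.int c hc).2 (by omega))
    rcases hac'.eq_or_lt with h | h
    · have : a = ⟨c, hc'⟩ := Fin.ext h
      rw [this]; exact hlast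
    · exact (ih hc' (Fin.lt_def.2 h) (by omega)).trans hlast

/-- A block permutation that is increasing on every block is trivial. -/
lemma IsBlk.eq_one {N : ℕ} {b : Fin N → Bool} {blk : Fin N → ℕ} (H : IsBlk b blk)
    {w : Equiv.Perm (Fin N)} (hw : PB blk w)
    (h : ∀ a c : Fin N, a < c → blk a = blk c → w a < w c) : w = 1 := by
  have hs : StrictMono w := by
    intro a c hac
    rcases (H.mono hac.le).eq_or_lt with he | hlt
    · exact h a c hac he
    · by_contra hcon
      have := H.mono (not_lt.1 hcon)
      rw [hw, hw] at this
      omega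
  exact Equiv.ext fun a => congrFun hs.eq_id a

lemma IsBlk.exists_descent {N : ℕ} {b : Fin N → Bool} {blk : Fin N → ℕ} (H : IsBlk b blk)
    {w : Equiv.Perm (Fin N)} (hw : PB blk w) (h1 : w ≠ 1) :
    ∃ (i : ℕ) (h : i + 1 < N), Interior N b i ∧ w ⟨i + 1, h⟩ < w ⟨i, Nat.lt_of_succ_lt h⟩ := by
  by_contra! hcon
  refine h1 (H.eq_one hw fun a c hac he => ?_)
  have := H.strict (fun i => ((w i).val : ℤ)) (fun i h hi => ?_) a c hac he
  · exact_mod_cast this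
  · have h2 := hcon i h hi
    have h3 := h2.lt_of_ne (fun e => by simpa using w.injective e)
    exact_mod_cast h3

/-! ### Reduced words and Matsumoto's theorem -/

/-- A word in interior letters for `w` whose length is the number of inversions of `w`. -/
def Red {N : ℕ} (b : Fin N → Bool) (w : Equiv.Perm (Fin N)) (l : List ℕ) : Prop :=
  (∀ i ∈ l, Interior N b i) ∧ wordProd N l = w ∧ l.length = invP w

lemma wordProd_concat (N : ℕ) (l : List ℕ) (i : ℕ) :
    wordProd N (l ++ [i]) = wordProd N l * swapPerm N i := by simp [wordProd]

lemma Hword_concat {N : ℕ} (b : Fin N → Bool) (l : List ℕ) (i : ℕ) :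
    Hword b (l ++ [i]) = HopN b i * Hword b l := by simp [Hword]

lemma Hword_cons {N : ℕ} (b : Fin N → Bool) (l : List ℕ) (i : ℕ) :
    Hword b (i :: l) = Hword b l * HopN b i := by simp [Hword]

lemma invP_mul_swap_cases {N i : ℕ} (h : i + 1 < N) (w : Equiv.Perm (Fin N)) :
    (w ⟨i, Nat.lt_of_succ_lt h⟩ < w ⟨i + 1, h⟩ ∧ invP (w * swapPerm N i) = invP w + 1) ∨
    (w ⟨i + 1, h⟩ < w ⟨i, Nat.lt_of_succ_lt h⟩ ∧ invP (w * swapPerm N i) + 1 = invP w) := by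
  have hne : w ⟨i, Nat.lt_of_succ_lt h⟩ ≠ w ⟨i + 1, h⟩ := fun e => by simpa using w.injective e
  rcases lt_or_gt_of_ne hne with h1 | h1
  · exact Or.inl ⟨h1, invP_mul_swap h w h1⟩
  · exact Or.inr ⟨h1, invP_mul_swap' h w h1⟩

lemma invP_wordProd_le {N : ℕ} (b : Fin N → Bool) (l : List ℕ) (hl : ∀ i ∈ l, Interior N b i) :
    invP (wordProd N l) ≤ l.length := by
  induction l using List.reverseRecOn with
  | nil => simp [wordProd, invP_one]
  | append_singleton l i ih =>
    obtain ⟨-, h, -⟩ := hl i (by simp)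
    have h1 := ih fun j hj => hl j (by simp [hj])
    rw [wordProd_concat, List.length_append, List.length_singleton]
    rcases invP_mul_swap_cases h (wordProd N l) with h2 | h2 <;> omega

lemma IsBlk.wordProd {N : ℕ} {b : Fin N → Bool} {blk : Fin N → ℕ} (H : IsBlk b blk) (l : List ℕ)
    (hl : ∀ i ∈ l, Interior N b i) : PB blk (wordProd N l) := by
  induction l using List.reverseRecOn with
  | nil => simpa [_root_.wordProd] using PB_one
  | append_singleton l i ih =>
    rw [wordProd_concat]
    exact (ih fun j hj => hl j (by simp [hj])).mul (H.swap (hl i (by simp)))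

lemma Red.concat {N : ℕ} {b : Fin N → Bool} {w : Equiv.Perm (Fin N)} {l : List ℕ} {i : ℕ}
    (hr : Red b (w * swapPerm N i) l) (hi : Interior N b i)
    (hlen : invP (w * swapPerm N i) + 1 = invP w) : Red b w (l ++ [i]) := by
  refine ⟨?_, ?_, ?_⟩
  · intro j hj
    rcases List.mem_append.1 hj with h | h
    · exact hr.1 j h
    · rw [List.mem_singleton.1 h]; exact hi
  · rw [wordProd_concat, hr.2.1, mul_assoc, swapPerm_mul_self, mul_one]
  · rw [List.length_append, List.length_singleton, hr.2.2, hlen]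

/-- The last letter of a reduced word is a descent, and dropping it leaves a reduced word. -/
lemma Red.of_concat {N : ℕ} {b : Fin N → Bool} {w : Equiv.Perm (Fin N)} {l : List ℕ} {i : ℕ}
    (hr : Red b w (l ++ [i])) :
    Red b (w * swapPerm N i) l ∧ invP (w * swapPerm N i) + 1 = invP w ∧
      ∃ h : i + 1 < N, w ⟨i + 1, h⟩ < w ⟨i, Nat.lt_of_succ_lt h⟩ := by
  obtain ⟨h1, h2, h3⟩ := hr
  obtain ⟨-, h, -⟩ := h1 i (by simp)
  have hl : ∀ j ∈ l, Interior N b j := fun j hj => h1 j (by simp [hj])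
  have e : _root_.wordProd N l = w * swapPerm N i := by
    rw [← h2, wordProd_concat, mul_assoc, swapPerm_mul_self, mul_one]
  have hle := invP_wordProd_le b l hl
  rw [e] at hle
  rw [List.length_append, List.length_singleton] at h3
  rcases invP_mul_swap_cases h w with ⟨h4, h5⟩ | ⟨h4, h5⟩
  · omega
  · exact ⟨⟨hl, e, by omega⟩, h5, h, h4⟩

lemma IsBlk.exists_red {N : ℕ} {b : Fin N → Bool} {blk : Fin N → ℕ} (H : IsBlk b blk) :
    ∀ (n : ℕ) (w : Equiv.Perm (Fin N)), PB blk w → invP w = n → ∃ l, Red b w l := by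
  intro n
  induction n with
  | zero =>
    intro w hw hn
    refine ⟨[], by simp, ?_, by simp [hn]⟩
    by_contra hne
    obtain ⟨i, h, hi, hd⟩ := H.exists_descent hw (fun e => hne (by simp [_root_.wordProd, e]))
    have := invP_mul_swap' h w hd
    omega
  | succ n ih =>
    intro w hw hn
    have hne : w ≠ 1 := by rintro rfl; rw [invP_one] at hn; omega
    obtain ⟨i, h, hi, hd⟩ := H.exists_descent hw hne
    have h1 := invP_mul_swap' h w hd
    obtain ⟨l, hl⟩ := ih (w * swapPerm N i) (hw.mul (H.swap hi)) (by omega)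
    exact ⟨l ++ [i], hl.concat hi h1⟩

lemma swapPerm_comm {N i j : ℕ} (hij : i + 1 < j) (hj : j + 1 < N) :
    swapPerm N i * swapPerm N j = swapPerm N j * swapPerm N i := by
  have hi : i + 1 < N := by omega
  refine Equiv.ext fun a => Fin.ext ?_
  simp only [Equiv.Perm.mul_apply, swapPerm_val hi, swapPerm_val hj]
  split_ifs <;> omega

lemma swapPerm_braid {N i : ℕ} (h : i + 1 + 1 < N) :
    swapPerm N i * swapPerm N (i + 1) * swapPerm N i =
      swapPerm N (i + 1) * swapPerm N i * swapPerm N (i + 1) := by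
  have hi : i + 1 < N := by omega
  refine Equiv.ext fun a => Fin.ext ?_
  simp only [Equiv.Perm.mul_apply, swapPerm_val hi, swapPerm_val h]
  split_ifs <;> omega

/-- The inductive step of Matsumoto's theorem: two reduced words of `w` ending in different letters
`i < j` are both compared with words ending in the longest word of the dihedral group
`⟨s_i, s_j⟩`, for which the braid relations apply. -/
lemma IsBlk.matsumoto_aux {N : ℕ} {b : Fin N → Bool} {blk : Fin N → ℕ} (H : IsBlk b blk)
    (w : Equiv.Perm (Fin N)) (hw : PB blk w)
    (IH : ∀ w' l l', invP w' < invP w → Red b w' l → Red b w' l' → Hword b l = Hword b l')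
    {i j : ℕ} (hij : i < j) (hi : Interior N b i) (hj : Interior N b j) {u v : List ℕ}
    (hu : Red b w (u ++ [i])) (hv : Red b w (v ++ [j])) :
    Hword b (u ++ [i]) = Hword b (v ++ [j]) := by
  obtain ⟨ru, nu, h1, du⟩ := hu.of_concat
  obtain ⟨rv, nv, h2, dv⟩ := hv.of_concat
  have pi := H.swap hi
  have pj := H.swap hj
  rw [Hword_concat, Hword_concat]
  obtain rfl | hlt : j = i + 1 ∨ i + 1 < j := by omega
  · -- adjacent letters: `w = y s_i s_{i+1} s_i` with lengths adding up
    have e : w * swapPerm N i * swapPerm N (i + 1) * swapPerm N i =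
        w * swapPerm N (i + 1) * swapPerm N i * swapPerm N (i + 1) := by
      simp only [mul_assoc, ← swapPerm_braid h2]
    have fix2 : swapPerm N i ⟨i + 1 + 1, h2⟩ = ⟨i + 1 + 1, h2⟩ := by
      apply Fin.ext; rw [swapPerm_val h1]; simp only; split_ifs <;> omega
    have fix0 : swapPerm N (i + 1) ⟨i, Nat.lt_of_succ_lt h1⟩ = ⟨i, Nat.lt_of_succ_lt h1⟩ := by
      apply Fin.ext; rw [swapPerm_val h2]; simp only; split_ifs <;> omega
    have m1 : invP (w * swapPerm N i * swapPerm N (i + 1)) + 1 = invP (w * swapPerm N i) := by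
      apply invP_mul_swap' h2
      rw [Equiv.Perm.mul_apply, Equiv.Perm.mul_apply, fix2, swapPerm_right h1]
      exact dv.trans du
    have m2 : invP (w * swapPerm N i * swapPerm N (i + 1) * swapPerm N i) + 1 =
        invP (w * swapPerm N i * swapPerm N (i + 1)) := by
      apply invP_mul_swap' h1
      simp only [Equiv.Perm.mul_apply]
      rw [fix0, swapPerm_left h1, swapPerm_left h2, fix2]
      exact dv
    have m3 : invP (w * swapPerm N (i + 1) * swapPerm N i) + 1 = invP (w * swapPerm N (i + 1)) := by
      apply invP_mul_swap' h1
      rw [Equiv.Perm.mul_apply, Equiv.Perm.mul_apply, fix0, swapPerm_left h2]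
      exact dv.trans du
    obtain ⟨l, hl⟩ := H.exists_red _ _ (((hw.mul pi).mul pj).mul pi) rfl
    have a1 := (hl.concat hi m2).concat hj m1
    rw [e] at hl m2
    have a2 := (hl.concat hj (by omega)).concat hi m3
    rw [IH _ _ _ (by omega) ru a1, IH _ _ _ (by omega) rv a2]
    simp only [Hword_concat, ← mul_assoc]
    rw [HopN_braid b hi hj]
  · have e : w * swapPerm N i * swapPerm N j = w * swapPerm N j * swapPerm N i := by
      simp only [mul_assoc, swapPerm_comm hlt h2]
    have fj : swapPerm N i ⟨j, Nat.lt_of_succ_lt h2⟩ = ⟨j, Nat.lt_of_succ_lt h2⟩ := by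
      apply Fin.ext; rw [swapPerm_val h1]; simp only; split_ifs <;> omega
    have fj' : swapPerm N i ⟨j + 1, h2⟩ = ⟨j + 1, h2⟩ := by
      apply Fin.ext; rw [swapPerm_val h1]; simp only; split_ifs <;> omega
    have m1 : invP (w * swapPerm N i * swapPerm N j) + 1 = invP (w * swapPerm N i) := by
      apply invP_mul_swap' h2
      rw [Equiv.Perm.mul_apply, Equiv.Perm.mul_apply, fj, fj']
      exact dv
    obtain ⟨l, hl⟩ := H.exists_red _ _ ((hw.mul pi).mul pj) rfl
    have a1 := hl.concat hj m1
    rw [e] at hl m1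
    have a2 := hl.concat hi (by omega)
    rw [IH _ _ _ (by omega) ru a1, IH _ _ _ (by omega) rv a2]
    simp only [Hword_concat, ← mul_assoc]
    rw [HopN_comm b hlt h2]

/-- Matsumoto's theorem: `H_w` does not depend on the reduced word. -/
lemma IsBlk.matsumoto {N : ℕ} {b : Fin N → Bool} {blk : Fin N → ℕ} (H : IsBlk b blk) :
    ∀ (n : ℕ) (w : Equiv.Perm (Fin N)) (l l' : List ℕ), invP w = n → Red b w l → Red b w l' →
      Hword b l = Hword b l' := by
  intro n
  induction n using Nat.strong_induction_on with
  | _ n ih =>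
    intro w l l' hn hl hl'
    have hw : PB blk w := by rw [← hl.2.1]; exact H.wordProd l hl.1
    have IH : ∀ w' l l', invP w' < invP w → Red b w' l → Red b w' l' →
        Hword b l = Hword b l' := fun w' l l' h => ih _ (hn ▸ h) w' l l' rfl
    rcases List.eq_nil_or_concat' l with rfl | ⟨u, i, rfl⟩
    · have : l' = [] := List.eq_nil_of_length_eq_zero (by rw [hl'.2.2, ← hl.2.2]; rfl)
      rw [this]
    rcases List.eq_nil_or_concat' l' with rfl | ⟨v, j, rfl⟩
    · have h1 := hl.2.2
      rw [← hl'.2.2] at h1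
      simp at h1
    have hi := hl.1 i (by simp)
    have hj := hl'.1 j (by simp)
    rcases lt_trichotomy i j with h | rfl | h
    · exact H.matsumoto_aux w hw IH h hi hj hl hl'
    · obtain ⟨r1, n1, -⟩ := hl.of_concat
      obtain ⟨r2, -, -⟩ := hl'.of_concat
      rw [Hword_concat, Hword_concat, IH _ _ _ (by omega) r1 r2]
    · exact (H.matsumoto_aux w hw IH h hj hi hl' hl).symm

lemma IsBlk.blen_eq {N : ℕ} {b : Fin N → Bool} {blk : Fin N → ℕ} (H : IsBlk b blk)
    {w : Equiv.Perm (Fin N)} (hw : PB blk w) : blen b w = invP w := by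
  obtain ⟨l, h1, h2, h3⟩ := H.exists_red _ w hw rfl
  apply le_antisymm
  · exact Nat.sInf_le ⟨l, h1, h2, h3⟩
  · refine le_csInf ⟨_, l, h1, h2, rfl⟩ ?_
    rintro k ⟨l', h4, h5, rfl⟩
    rw [← h5]
    exact invP_wordProd_le b l' h4

lemma IsBlk.Hw_eq {N : ℕ} {b : Fin N → Bool} {blk : Fin N → ℕ} (H : IsBlk b blk)
    {w : Equiv.Perm (Fin N)} (hw : PB blk w) {l : List ℕ} (hl : Red b w l) :
    Hw b w = Hword b l := by
  have hex : ∃ l : List ℕ, IsReducedWord b w l :=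
    ⟨l, hl.1, hl.2.1, hl.2.2.trans (H.blen_eq hw).symm⟩
  unfold Hw
  rw [dif_pos hex]
  obtain ⟨h1, h2, h3⟩ := hex.choose_spec
  exact H.matsumoto _ w _ _ rfl ⟨h1, h2, h3.trans (H.blen_eq hw)⟩ hl

lemma IsBlk.Hw_swap_mul {N : ℕ} {b : Fin N → Bool} {blk : Fin N → ℕ} (H : IsBlk b blk)
    {w : Equiv.Perm (Fin N)} (hw : PB blk w) {i : ℕ} (hi : Interior N b i) (h : i + 1 < N)
    (hasc : w⁻¹ ⟨i, Nat.lt_of_succ_lt h⟩ < w⁻¹ ⟨i + 1, h⟩) :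
    Hw b (swapPerm N i * w) = Hw b w * HopN b i := by
  obtain ⟨l, hl⟩ := H.exists_red _ w hw rfl
  have hl' : Red b (swapPerm N i * w) (i :: l) := by
    refine ⟨?_, ?_, ?_⟩
    · simpa using ⟨hi, hl.1⟩
    · rw [← hl.2.1]; simp [_root_.wordProd]
    · rw [List.length_cons, hl.2.2, invP_swap_mul h w hasc]
  rw [H.Hw_eq hw hl, H.Hw_eq ((H.swap hi).mul hw) hl', Hword_cons]

/-! ### The antisymmetrizer -/

open scoped Classical in
/-- `H_0` without the normalization by `(-q)^{-ℓ(w_0)}`. -/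
def S0 {N : ℕ} (b : Fin N → Bool) (blk : Fin N → ℕ) : Module.End (RatFunc ℚ) (Tsp N) :=
  ∑ w ∈ Finset.univ.filter (fun x : Equiv.Perm (Fin N) => PB blk x), (-qq) ^ invP w • Hw b w

lemma antisymm_aux {K V : Type*} [Field K] [AddCommGroup V] [Module K V] {q : K}
    (hq : q * q⁻¹ = 1) {T : Module.End K V} (hT : T * T = 1 - (q - q⁻¹) • T) :
    (1 + (-q) • T) * T = (-q) • (1 + (-q) • T) := by
  ext v
  have h : T (T v) = v - (q - q⁻¹) • T v := LinearMap.congr_fun hT v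
  simp only [Module.End.mul_apply, LinearMap.add_apply, LinearMap.smul_apply, Module.End.one_apply,
    h]
  match_scalars
  · linear_combination -hq
  · ring

/-- The operator `H_0` absorbs every `H_i` on the left with eigenvalue `-q`. -/
lemma IsBlk.S0_mul {N : ℕ} {b : Fin N → Bool} {blk : Fin N → ℕ} (H : IsBlk b blk) {i : ℕ}
    (hi : Interior N b i) : S0 b blk * HopN b i = (-qq) • S0 b blk := by
  classical
  obtain ⟨-, h, -⟩ := id hi
  set s := swapPerm N i with hs
  have hss : s * s = 1 := swapPerm_mul_self N i
  have hsinv : s⁻¹ = s := inv_eq_of_mul_eq_one_left hss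
  have hps : PB blk s := H.swap hi
  set B := Finset.univ.filter (fun x : Equiv.Perm (Fin N) => PB blk x) with hB
  set asc : Equiv.Perm (Fin N) → Prop :=
    fun w => w⁻¹ ⟨i, Nat.lt_of_succ_lt h⟩ < w⁻¹ ⟨i + 1, h⟩ with hasc
  have hflip : ∀ w, asc (s * w) ↔ ¬ asc w := by
    intro w
    have hne : w⁻¹ ⟨i, Nat.lt_of_succ_lt h⟩ ≠ w⁻¹ ⟨i + 1, h⟩ :=
      fun e => by simpa using w⁻¹.injective e
    simp only [hasc, mul_inv_rev, hsinv, Equiv.Perm.mul_apply]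
    rw [hs, swapPerm_left h, swapPerm_right h, not_lt]
    exact ⟨le_of_lt, fun h => h.lt_of_ne hne.symm⟩
  have key : S0 b blk = ∑ w ∈ B.filter asc, (-qq) ^ invP w • (Hw b w * (1 + (-qq) • HopN b i)) := by
    have e1 : S0 b blk = ∑ w ∈ B, (-qq) ^ invP w • Hw b w := by
      unfold S0; rw [hB]
    rw [e1, ← Finset.sum_filter_add_sum_filter_not B asc]
    have e2 : ∑ w ∈ B.filter (fun w => ¬ asc w), (-qq) ^ invP w • Hw b w =
        ∑ w ∈ B.filter asc, (-qq) ^ (invP w + 1) • (Hw b w * HopN b i) := by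
      refine Finset.sum_bij' (fun w _ => s * w) (fun w _ => s * w) ?_ ?_ ?_ ?_ ?_
      · intro w hw
        simp only [hB, Finset.mem_filter, Finset.mem_univ, true_and] at hw ⊢
        exact ⟨hps.mul hw.1, (hflip w).2 hw.2⟩
      · intro w hw
        simp only [hB, Finset.mem_filter, Finset.mem_univ, true_and] at hw ⊢
        exact ⟨hps.mul hw.1, fun h => (hflip w).1 h hw.2⟩
      · intro w _; rw [← mul_assoc, hss, one_mul]
      · intro w _; rw [← mul_assoc, hss, one_mul]
      · intro w hw
        simp only [hB, Finset.mem_filter, Finset.mem_univ, true_and] at hw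
        have ha := (hflip w).2 hw.2
        have hp := hps.mul hw.1
        have e3 : s * (s * w) = w := by rw [← mul_assoc, hss, one_mul]
        have e4 := invP_swap_mul h (s * w) ha
        have e5 := H.Hw_swap_mul hp hi h ha
        rw [← hs, e3] at e4 e5
        rw [← e4, ← e5]
    rw [e2, ← Finset.sum_add_distrib]
    refine Finset.sum_congr rfl fun w _ => ?_
    rw [mul_add, mul_one, smul_add, mul_smul_comm, smul_smul, pow_succ]
  have hT : (1 + (-qq) • HopN b i) * HopN b i = (-qq) • (1 + (-qq) • HopN b i) :=
    antisymm_aux (mul_inv_cancel₀ qq_ne_zero) (HopN_sq b h)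
  rw [key, Finset.sum_mul, Finset.smul_sum]
  refine Finset.sum_congr rfl fun w _ => ?_
  rw [smul_mul_assoc, mul_assoc, hT, mul_smul_comm, smul_comm]

lemma IsBlk.S0_eq_zero {N : ℕ} {b : Fin N → Bool} {blk : Fin N → ℕ} (H : IsBlk b blk) {i : ℕ}
    (hi : Interior N b i) (h : i + 1 < N) {f : Fin N → ℤ}
    (hf : f ⟨i, Nat.lt_of_succ_lt h⟩ = f ⟨i + 1, h⟩) : S0 b blk (Finsupp.single f 1) = 0 := by
  have h1 := LinearMap.congr_fun (H.S0_mul hi) (Finsupp.single f 1)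
  rw [Module.End.mul_apply, HopN_single, HM_eq h hf, map_smul, LinearMap.smul_apply] at h1
  have h2 : (qq⁻¹ - -qq) • S0 b blk (Finsupp.single f 1) = 0 := by rw [sub_smul, h1, sub_self]
  exact (smul_eq_zero.1 h2).resolve_left (sub_ne_zero.2 qq_inv_ne_neg)

lemma IsBlk.S0_swap {N : ℕ} {b : Fin N → Bool} {blk : Fin N → ℕ} (H : IsBlk b blk) {i : ℕ}
    (hi : Interior N b i) (h : i + 1 < N) {f : Fin N → ℤ}
    (hf : sgn b ⟨i, Nat.lt_of_succ_lt h⟩ * f ⟨i, Nat.lt_of_succ_lt h⟩ <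
      sgn b ⟨i, Nat.lt_of_succ_lt h⟩ * f ⟨i + 1, h⟩) :
    S0 b blk (Finsupp.single (f ∘ swapPerm N i) 1) = (-qq) • S0 b blk (Finsupp.single f 1) := by
  have h1 := LinearMap.congr_fun (H.S0_mul hi) (Finsupp.single f 1)
  rwa [Module.End.mul_apply, HopN_single, HM_lt h hf, LinearMap.smul_apply] at h1

/-- `f` is strictly increasing on each block up to the sign of the block. -/
def SAnti {N : ℕ} (b : Fin N → Bool) (blk : Fin N → ℕ) (f : Fin N → ℤ) : Prop :=
  ∀ i j : Fin N, i < j → blk i = blk j → sgn b i * f i < sgn b i * f j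

lemma IsBlk.sgn_eq {N : ℕ} {b : Fin N → Bool} {blk : Fin N → ℕ} (H : IsBlk b blk) {i j : Fin N}
    (h : blk i = blk j) : sgn b i = sgn b j := by simp only [sgn, H.col i j h]

/-- Every `M_f H_0` lies in the span of those with `f` strictly antidominant, by induction on the
number of inversions of the sign-twisted function `i ↦ (-1)^{b_i} f(i)`. -/
lemma IsBlk.S0_mem_span {N : ℕ} {b : Fin N → Bool} {blk : Fin N → ℕ} (H : IsBlk b blk)
    (P : Submodule (RatFunc ℚ) (Tsp N))
    (hP : ∀ g, SAnti b blk g → S0 b blk (Finsupp.single g 1) ∈ P) :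
    ∀ (n : ℕ) (f : Fin N → ℤ), invF (fun i => sgn b i * f i) = n →
      S0 b blk (Finsupp.single f 1) ∈ P := by
  intro n
  induction n using Nat.strong_induction_on with
  | _ n ih =>
    intro f hn
    by_cases heq : ∃ (i : ℕ) (h : i + 1 < N), Interior N b i ∧
        f ⟨i, Nat.lt_of_succ_lt h⟩ = f ⟨i + 1, h⟩
    · obtain ⟨i, h, hi, hf⟩ := heq
      rw [H.S0_eq_zero hi h hf]
      exact P.zero_mem
    by_cases hgt : ∃ (i : ℕ) (h : i + 1 < N), Interior N b i ∧
        sgn b ⟨i, Nat.lt_of_succ_lt h⟩ * f ⟨i + 1, h⟩ <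
          sgn b ⟨i, Nat.lt_of_succ_lt h⟩ * f ⟨i, Nat.lt_of_succ_lt h⟩
    · obtain ⟨i, h, hi, hf⟩ := hgt
      have hblk := (H.int i h).1 hi
      have hss : (f ∘ swapPerm N i) ∘ swapPerm N i = f :=
        funext fun a => congrArg f (swapPerm_apply_self N i a)
      have hlt : sgn b ⟨i, Nat.lt_of_succ_lt h⟩ * (f ∘ swapPerm N i) ⟨i, Nat.lt_of_succ_lt h⟩ <
          sgn b ⟨i, Nat.lt_of_succ_lt h⟩ * (f ∘ swapPerm N i) ⟨i + 1, h⟩ := by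
        simpa [swapPerm_left h, swapPerm_right h] using hf
      have h1 := H.S0_swap hi h hlt
      rw [hss] at h1
      rw [h1]
      apply P.smul_mem
      have h2 := invF_swap h (fun a => sgn b a * (f ∘ swapPerm N i) a)
        (by rw [← H.sgn_eq hblk]; exact hlt)
      have h3 : (fun a => sgn b a * (f ∘ swapPerm N i) a) ∘ swapPerm N i =
          fun a => sgn b a * f a := by
        funext a
        simp only [Function.comp_apply, swapPerm_apply_self, H.sgn_eq (H.swap hi a)]
      rw [h3, hn] at h2
      exact ih _ (by omega) _ rfl
    · push Not at heq hgt
      apply hP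
      intro a c hac he
      have := H.strict (fun a => sgn b a * f a) (fun i h hi => ?_) a c hac he
      · simpa [H.sgn_eq he] using this
      · rw [← H.sgn_eq ((H.int i h).1 hi)]
        refine (hgt i h hi).lt_of_ne fun e => heq i h hi (mul_left_cancel₀ (sgn_ne_zero _ _) e)

/-- On a strictly antidominant basis vector no quadratic relation is ever used:
`M_g H_w = M_{g·w}`. -/
lemma IsBlk.Hword_single {N : ℕ} {b : Fin N → Bool} {blk : Fin N → ℕ} (H : IsBlk b blk)
    {g : Fin N → ℤ} (hg : SAnti b blk g) (l : List ℕ) :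
    ∀ w, Red b w l → Hword b l (Finsupp.single g 1) = Finsupp.single (g ∘ w) 1 := by
  induction l using List.reverseRecOn with
  | nil =>
    intro w hw
    have : w = 1 := by rw [← hw.2.1]; rfl
    subst this
    rfl
  | append_singleton l i ih =>
    intro w hw
    obtain ⟨hr, -, h, hd⟩ := hw.of_concat
    have hi := hw.1 i (by simp)
    have hp : PB blk (w * swapPerm N i) := by rw [← hr.2.1]; exact H.wordProd l hr.1
    have hblk := (H.int i h).1 hi
    rw [Hword_concat, Module.End.mul_apply, ih _ hr, HopN_single, HM_lt h, Function.comp_assoc,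
      ← Equiv.Perm.coe_mul, mul_assoc, swapPerm_mul_self, mul_one]
    rw [← H.sgn_eq (hp ⟨i, Nat.lt_of_succ_lt h⟩)]
    apply hg
    · simpa [swapPerm_left h, swapPerm_right h] using hd
    · rw [hp, hp, hblk]

/-- The coefficient of `M_{g'}` in `M_g H_0` for `g`, `g'` strictly antidominant: only `w = 1`
can contribute. -/
lemma IsBlk.S0_apply {N : ℕ} {b : Fin N → Bool} {blk : Fin N → ℕ} (H : IsBlk b blk)
    {g g' : Fin N → ℤ} (hg : SAnti b blk g) (hg' : SAnti b blk g') :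
    S0 b blk (Finsupp.single g 1) g' = if g = g' then 1 else 0 := by
  classical
  have hone : ∀ w, PB blk w → g ∘ w = g' → w = 1 := by
    intro w hw he
    refine H.eq_one hw fun a c hac hblk => ?_
    by_contra hcon
    have hne : w c ≠ w a := fun e => hac.ne (w.injective e).symm
    have h1 := hg _ _ ((not_lt.1 hcon).lt_of_ne hne) (by rw [hw, hw, hblk])
    have h2 := hg' a c hac hblk
    rw [← he, Function.comp_apply, Function.comp_apply] at h2
    rw [H.sgn_eq (hw c), ← H.sgn_eq hblk] at h1
    exact lt_asymm h1 h2
  have hterm : ∀ w ∈ Finset.univ.filter (fun x : Equiv.Perm (Fin N) => PB blk x),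
      ((-qq) ^ invP w • Hw b w) (Finsupp.single g 1) g' =
        if w = 1 then (if g = g' then 1 else 0) else 0 := by
    intro w hw
    have hw' : PB blk w := by simpa using hw
    obtain ⟨l, hl⟩ := H.exists_red _ w hw' rfl
    rw [LinearMap.smul_apply, H.Hw_eq hw' hl, H.Hword_single hg l w hl, Finsupp.smul_apply,
      Finsupp.single_apply]
    by_cases h1 : w = 1
    · subst h1
      simp [invP_one]
    · rw [if_neg h1, if_neg (fun e => h1 (hone w hw' e)), smul_zero]
  unfold S0
  rw [LinearMap.sum_apply, Finsupp.finsetSum_apply]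
  have hmem : (1 : Equiv.Perm (Fin N)) ∈
      Finset.univ.filter (fun x : Equiv.Perm (Fin N) => PB blk x) := by simpa using PB_one
  convert (Finset.sum_congr rfl hterm).trans ?_
  rw [Finset.sum_ite_eq' _ _ _, if_pos hmem]

/-! ### Translation from the block data -/

/-- Block labels exist: `blk i` is the unique `k < d` with `r k ≤ i < r (k + 1)`. -/
lemma BlockData.exists_blk {N : ℕ} {b : Fin N → Bool} {d : ℕ} {r : ℕ → ℕ}
    (hB : BlockData N b d r) :
    ∃ blk : Fin N → ℕ, IsBlk b blk ∧
      (∀ i, blk i < d ∧ r (blk i) ≤ i.val ∧ i.val < r (blk i + 1)) ∧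
      ∀ (i : Fin N) (k : ℕ), k < d → r k ≤ i.val → i.val < r (k + 1) → blk i = k := by
  obtain ⟨h0, hd, hr, hcol, hbd⟩ := hB
  have hmono : ∀ k l, k ≤ l → l ≤ d → r k ≤ r l := by
    intro k l hkl
    induction l, hkl using Nat.le_induction with
    | base => intro _; exact le_rfl
    | succ l _ ih => intro hl; exact (ih (by omega)).trans (hr l (by omega)).le
  have hex : ∀ i : Fin N, ∃ k, k < d ∧ r k ≤ i.val ∧ i.val < r (k + 1) := by
    intro i
    have aux : ∀ k, k ≤ d → i.val < r k → ∃ k', k' < d ∧ r k' ≤ i.val ∧ i.val < r (k' + 1) := by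
      intro k
      induction k with
      | zero => intro _ h; omega
      | succ k ih =>
        intro hk h
        by_cases h1 : i.val < r k
        · exact ih (by omega) h1
        · exact ⟨k, by omega, by omega, h⟩
    exact aux d le_rfl (by rw [hd]; exact i.2)
  choose blk hblk using hex
  have hmonoblk : Monotone blk := by
    intro i j hij
    by_contra hcon
    have h1 := hmono (blk j + 1) (blk i) (by omega) (hblk i).1.le
    have h2 := hblk i
    have h3 := hblk j
    have h4 : i.val ≤ j.val := hij
    omega
  have huniq : ∀ (i : Fin N) (k : ℕ), k < d → r k ≤ i.val → i.val < r (k + 1) → blk i = k := by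
    intro i k hk h1 h2
    have h3 := hblk i
    rcases lt_trichotomy (blk i) k with h | h | h
    · have := hmono (blk i + 1) k (by omega) hk.le
      omega
    · exact h
    · have := hmono (k + 1) (blk i) (by omega) h3.1.le
      omega
  have hc : ∀ i j, blk i = blk j → b i = b j := by
    intro i j e
    have h1 := hblk i
    have h2 := hblk j
    rw [← e] at h2
    exact hcol (blk i) h1.1 i j h1.2.1 h1.2.2 h2.2.1 h2.2.2
  refine ⟨blk, ⟨hmonoblk, ?_, hc⟩, hblk, huniq⟩
  intro i h
  constructor
  · rintro ⟨_, _, hbb⟩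
    by_contra hne
    have hle : blk ⟨i, Nat.lt_of_succ_lt h⟩ ≤ blk ⟨i + 1, h⟩ := hmonoblk (Fin.le_def.2 (by simp))
    have h1 := hblk ⟨i, Nat.lt_of_succ_lt h⟩
    have h2 := hblk ⟨i + 1, h⟩
    simp only at h1 h2
    have h3 := hmono (blk ⟨i, Nat.lt_of_succ_lt h⟩ + 1) (blk ⟨i + 1, h⟩) (by omega) h2.1.le
    have h4 : r (blk ⟨i + 1, h⟩) = i + 1 := by omega
    have h5 := hbd (blk ⟨i + 1, h⟩) (by omega) h2.1
    simp only [h4, Nat.add_sub_cancel] at h5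
    exact h5 (Nat.lt_of_succ_lt h) h hbb
  · intro e
    exact ⟨Nat.lt_of_succ_lt h, h, hc _ _ e⟩

/-- `{K_f : f ∈ ℤ^{b,+}}` is a `ℚ(q)`-basis of `ℰ^b = 𝕋^b H_0`: it is linearly independent
and spans the range of `H_0`. -/
theorem Kel_basis (m n d : ℕ) (b : Fin (m + n) → Bool) (r : ℕ → ℕ)
    (w0 : Equiv.Perm (Fin (m + n))) (hb : IsZeroOneSeq m n b)
    (hblock : BlockData (m + n) b d r) (hw0 : IsW0 (m + n) d r w0) :
    LinearIndependent (RatFunc ℚ)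
      (fun f : {f : Fin (m + n) → ℤ // Dominant b d r f} => Kel b d r w0 f.val) ∧
    Submodule.span (RatFunc ℚ)
      (Set.range fun f : {f : Fin (m + n) → ℤ // Dominant b d r f} => Kel b d r w0 f.val) =
      LinearMap.range (H0 b d r w0) := by
  obtain ⟨blk, H, hblk, huniq⟩ := hblock.exists_blk
  have hPB : ∀ x, BlockPerm (m + n) d r x ↔ PB blk x := by
    intro x
    constructor
    · intro hx i
      have h1 := hblk i
      have h2 := hx (blk i) h1.1 i h1.2.1 h1.2.2
      exact huniq _ _ h1.1 h2.1 h2.2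
    · intro hx k hk i h1 h2
      have h3 := hblk (x i)
      rw [hx, huniq i k hk h1 h2] at h3
      exact h3.2
  have hdom : ∀ f, Dominant b d r f ↔
      ∀ i j : Fin (m + n), i < j → blk i = blk j → sgn b i * f j < sgn b i * f i := by
    intro f
    constructor
    · intro hf i j hij e
      have h1 := hblk i
      have h2 := hblk j
      rw [← e] at h2
      exact hf (blk i) h1.1 i j h1.2.1 hij h2.2.2
    · intro hf k hk i j h1 h2 h3
      exact hf i j h2 ((huniq i k hk h1 (by omega)).trans (huniq j k hk (by omega) h3).symm)
  have hw0' : ∀ i, (w0 i).val = r (blk i) + r (blk i + 1) - 1 - i.val := fun i =>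
    hw0 (blk i) (hblk i).1 i (hblk i).2.1 (hblk i).2.2
  have hw0PB : PB blk w0 := by
    intro i
    have h1 := hblk i
    have h2 := hw0' i
    exact huniq _ _ h1.1 (by omega) (by omega)
  have hw0rev : ∀ i j, i < j → blk i = blk j → w0 j < w0 i := by
    intro i j hij e
    have h1 := hblk j
    have h2 := hw0' i
    have h3 := hw0' j
    rw [Fin.lt_def] at hij ⊢
    rw [e] at h2
    omega
  have hanti : ∀ f, Dominant b d r f → SAnti b blk (f ∘ w0) := by
    intro f hf i j hij e
    have h1 := (hdom f).1 hf _ _ (hw0rev i j hij e) (by rw [hw0PB, hw0PB, e])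
    rwa [H.sgn_eq (hw0PB j), ← H.sgn_eq e] at h1
  have hanti' : ∀ g, SAnti b blk g → Dominant b d r (g ∘ ⇑w0⁻¹) := by
    intro g hg
    rw [hdom]
    intro i j hij e
    have hp := hw0PB.inv
    have hlt : w0⁻¹ j < w0⁻¹ i := by
      by_contra hcon
      have hne : w0⁻¹ i ≠ w0⁻¹ j := fun e' => hij.ne (w0⁻¹.injective e')
      have := hw0rev _ _ ((not_lt.1 hcon).lt_of_ne hne) (by rw [hp, hp, e])
      rw [← Equiv.Perm.mul_apply, ← Equiv.Perm.mul_apply, mul_inv_cancel] at this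
      exact lt_asymm hij this
    have h1 := hg _ _ hlt (by rw [hp, hp, e])
    rwa [H.sgn_eq (hp j), ← H.sgn_eq e] at h1
  have hc0 : (-qq) ^ (-(blen b w0 : ℤ)) ≠ 0 := zpow_ne_zero _ (neg_ne_zero.2 qq_ne_zero)
  have hH0 : H0 b d r w0 = (-qq) ^ (-(blen b w0 : ℤ)) • S0 b blk := by
    unfold H0 S0
    rw [Finset.smul_sum]
    refine Finset.sum_congr (Finset.ext fun w => by simp [hPB]) fun w hw => ?_
    have hw' : PB blk w := by simpa using hw
    rw [smul_smul, H.blen_eq hw', sub_eq_add_neg, zpow_add₀ (neg_ne_zero.2 qq_ne_zero),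
      zpow_natCast, mul_comm]
  generalize (-qq) ^ (-(blen b w0 : ℤ)) = c0 at hc0 hH0
  have hKel : ∀ f, Kel b d r w0 f = c0 • S0 b blk (Finsupp.single (f ∘ w0) 1) := by
    intro f
    rw [Kel, hH0, LinearMap.smul_apply]
  constructor
  · -- evaluate a vanishing combination at `M_{f·w_0}`
    rw [linearIndependent_iff']
    intro s a hs f hf
    have h1 := DFunLike.congr_fun hs (f.val ∘ w0)
    rw [Finsupp.finsetSum_apply, Finset.sum_eq_single f] at h1
    · rw [Finsupp.smul_apply, hKel, Finsupp.smul_apply,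
        H.S0_apply (hanti _ f.2) (hanti _ f.2), if_pos rfl] at h1
      simpa [hc0] using h1
    · intro f' _ hne
      rw [Finsupp.smul_apply, hKel, Finsupp.smul_apply,
        H.S0_apply (hanti _ f'.2) (hanti _ f.2), if_neg, smul_zero, smul_zero]
      intro e
      exact hne (Subtype.ext (w0.surjective.injective_comp_right e))
    · intro h; exact absurd hf h
  · apply le_antisymm
    · rw [Submodule.span_le]
      rintro _ ⟨f, rfl⟩
      exact ⟨_, rfl⟩
    · rintro _ ⟨u, rfl⟩
      have hgen : ∀ f, S0 b blk (Finsupp.single f 1) ∈ Submodule.span (RatFunc ℚ)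
          (Set.range fun f : {f : Fin (m + n) → ℤ // Dominant b d r f} =>
            Kel b d r w0 f.val) := by
        intro f
        refine H.S0_mem_span _ (fun g hg => ?_) _ f rfl
        have hmem := Submodule.subset_span (R := RatFunc ℚ)
          (Set.mem_range_self (f := fun f : {f : Fin (m + n) → ℤ // Dominant b d r f} =>
            Kel b d r w0 f.val) ⟨g ∘ ⇑w0⁻¹, hanti' g hg⟩)
        have hgg : (g ∘ ⇑w0⁻¹) ∘ w0 = g := funext fun a => by simp
        have hk := hKel (g ∘ ⇑w0⁻¹)
        rw [hgg] at hk
        simp only [hk] at hmem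
        exact (Submodule.smul_mem_iff _ hc0).1 hmem
      rw [hH0, LinearMap.smul_apply]
      refine Submodule.smul_mem _ _ ?_
      induction u using Finsupp.induction_linear with
      | zero => rw [map_zero]; exact Submodule.zero_mem _
      | add u v hu hv => rw [map_add]; exact Submodule.add_mem _ hu hv
      | single f a =>
        have : (Finsupp.single f a : Tsp (m + n)) = a • Finsupp.single f 1 := by simp
        rw [this, map_smul]
        exact Submodule.smul_mem _ _ (hgen f)

end
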